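/- lim_{N→∞} Σ_{n=−N+1}^{N−1} Σ_{m∈ℤ} (−1)^{m+n} / (m² + (5n+1)²) = −(π/(5√5)) · log( −19 + 9√5 − 3√(85 − 38√5) ) + (π/5) · log( √5 − 1 ). -/

import Mathlib

open Filter

/-!
The inner sum is the partial fraction expansion of the hyperbolic cosecant, so the `n`-th term is
`π (-1) ^ n / (k sinh (π k))` with `k = 5n + 1`. Filtering the residue class of `k` modulo `5` by
roots of unity expresses the outer sum through the values at `x = 2π r / 5` of the cosine series
`∑ (-1) ^ (j + 1) cos (j x) / (j sinh (π j))`. By Jacobi's triple product these values are, up to a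
common constant, twice the logarithms of `ϑ₃ (r / 5 | i)`.

It remains to evaluate `a = ϑ₃ (1/5 | i) / ϑ₃ (0 | i)` and `b = ϑ₃ (2/5 | i) / ϑ₃ (0 | i)`. The
modulus `i` is fixed by `τ ↦ -1/τ`, which ties `ϑ₃ (1/2 | i)` to `ϑ₂ (0 | i)` and turns the
addition theorem into polynomial duplication formulas for `ϑ₃` and `ϑ₁ ^ 2`. At the points of order
`5` these give `4 (a b) ^ 2 - 2 a b - 1 = 0` and
`a ^ 5 + b ^ 5 = a b - (a b) ^ 2 + 2 (a b) ^ 3`, hence `a b` and `(b / a) ^ 5`.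
-/

open scoped Real

theorem hasSum_of_eq {ι M : Type*} [AddCommMonoid M] [TopologicalSpace M] {f g : ι → M} {a b : M}
    (h : HasSum f a) (hfg : ∀ i, g i = f i) (hab : b = a) : HasSum g b :=
  hab ▸ (funext hfg : g = f) ▸ h

section CosecantSeries

open Complex

variable {z : ℂ}

theorem hasSum_one_div_sq_sub_int_sq (hz : z ∈ integerComplement) :
    HasSum (fun m : ℤ ↦ 1 / (z ^ 2 - (m : ℂ) ^ 2)) (π * cot (π * z) / z) := by
  have hz0 : z ≠ 0 := integerComplement.ne_zero hz
  have cotTerm_eq (n : ℕ) : cotTerm z n / (2 * z) = 1 / (z ^ 2 - ((n : ℂ) + 1) ^ 2) := by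
    have h₁ : z + (n + 1) ≠ 0 := mod_cast integerComplement_add_ne_zero hz (n + 1)
    have h₂ : z - (n + 1) ≠ 0 := by
      simpa [sub_eq_add_neg] using integerComplement_add_ne_zero hz (-(n + 1))
    rw [sq_sub_sq, cotTerm]
    field_simp
    ring
  have positive : HasSum (fun n : ℕ ↦ 1 / (z ^ 2 - ((n : ℂ) + 1) ^ 2))
      ((π * cot (π * z) - 1 / z) / (2 * z)) := by
    rw [cot_series_rep' hz]
    simpa only [cotTerm_eq] using (summable_cotTerm hz).hasSum.div_const (2 * z)
  refine hasSum_of_eq (HasSum.of_add_one_of_neg_add_one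
    (hasSum_of_eq positive (fun n ↦ ?_) rfl) (hasSum_of_eq positive (fun n ↦ ?_) rfl))
    (fun _ ↦ rfl) ?_
  · push_cast; rfl
  · push_cast; rw [neg_sq]
  · rw [Int.cast_zero]
    field_simp
    ring

theorem half_mem_integerComplement (hz : z ∈ integerComplement) :
    z / 2 ∈ integerComplement := by
  rw [mem_integerComplement_iff] at hz ⊢
  rintro ⟨n, hn⟩
  exact hz ⟨2 * n, by push_cast; rw [hn]; ring⟩

theorem cot_half_sub_cot (hz : sin z ≠ 0) : cot (z / 2) - cot z = 1 / sin z := by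
  obtain ⟨w, rfl⟩ : ∃ w, z = 2 * w := ⟨z / 2, by ring⟩
  rw [sin_two_mul] at hz
  have hsin : sin w ≠ 0 := by rintro h; simp [h] at hz
  have hcos : cos w ≠ 0 := by rintro h; simp [h] at hz
  rw [mul_div_cancel_left₀ w two_ne_zero, cot, cot, sin_two_mul, cos_two_mul]
  field_simp
  ring

-- The alternating series is twice the sum over even `m` minus the sum over all `m`.
theorem hasSum_neg_one_zpow_div_sq_sub_int_sq (hz : z ∈ integerComplement) :
    HasSum (fun m : ℤ ↦ (-1) ^ m / (z ^ 2 - (m : ℂ) ^ 2)) (π / (z * sin (π * z))) := by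
  have hz0 : z ≠ 0 := integerComplement.ne_zero hz
  have even_terms : HasSum (fun m : ℤ ↦ if Even m then 1 / (z ^ 2 - (m : ℂ) ^ 2) else 0)
      (π * cot (π * z / 2) / (2 * z)) := by
    have injective_two_mul : Function.Injective fun k : ℤ ↦ 2 * k :=
      mul_right_injective₀ two_ne_zero
    refine (injective_two_mul.hasSum_iff fun m hm ↦ if_neg ?_).1 ?_
    · rintro ⟨k, rfl⟩
      exact hm ⟨k, two_mul k⟩
    · refine hasSum_of_eq
        ((hasSum_one_div_sq_sub_int_sq (half_mem_integerComplement hz)).div_const 4)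
        (fun k ↦ ?_) ?_
      · simp only [Function.comp_apply, even_two_mul, if_true, Int.cast_mul, Int.cast_ofNat]
        rw [div_div]
        congr 1
        ring
      · rw [mul_div_assoc (π : ℂ) z]
        field_simp
        ring
  refine hasSum_of_eq ((even_terms.mul_left 2).sub (hasSum_one_div_sq_sub_int_sq hz))
    (fun m ↦ ?_) ?_
  · rcases Int.even_or_odd m with hm | hm
    · rw [hm.neg_one_zpow, if_pos hm]; ring
    · rw [hm.neg_one_zpow, if_neg (Int.not_even_iff_odd.2 hm)]; ring
  · rw [← div_div]
    linear_combination (-π / z) * cot_half_sub_cot (sin_pi_mul_ne_zero hz)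

theorem hasSum_neg_one_zpow_div_int_sq_add_sq {a : ℝ} (ha : a ≠ 0) :
    HasSum (fun m : ℤ ↦ (-1 : ℝ) ^ m / ((m : ℝ) ^ 2 + a ^ 2)) (π / (a * Real.sinh (π * a))) := by
  have ha' : a * I ∈ integerComplement := by
    rw [mem_integerComplement_iff]
    rintro ⟨n, hn⟩
    exact ha (by simpa using (congrArg im hn).symm)
  rw [← hasSum_ofReal]
  refine hasSum_of_eq (hasSum_neg_one_zpow_div_sq_sub_int_sq ha').neg (fun m ↦ ?_) ?_
  · push_cast
    rw [mul_pow, I_sq, ← div_neg]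
    congr 1
    ring
  · rw [← mul_assoc (π : ℂ), sin_mul_I, mul_mul_mul_comm, I_mul_I, ← div_neg, mul_neg_one, neg_neg]
    push_cast
    rfl

end CosecantSeries

section CosineSeries

/-- The cosine series `∑ f j cos (j x)` over all integers `j`. -/
noncomputable def cosineSeries (f : ℤ → ℝ) (x : ℝ) : ℝ :=
  ∑' j : ℤ, f j * Real.cos (j * x)

variable {f : ℤ → ℝ}

theorem cosineSeries_two_pi_sub (f : ℤ → ℝ) (x : ℝ) :
    cosineSeries f (2 * π - x) = cosineSeries f x := by
  refine tsum_congr fun j ↦ ?_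
  rw [mul_sub, Real.cos_int_mul_two_pi_sub]

theorem tsum_eq_zero_of_odd {g : ℤ → ℝ} (hg : Function.Odd g) : ∑' j, g j = 0 := by
  have h : ∑' j, g j = -∑' j, g j := by
    rw [← tsum_neg, ← (Equiv.neg ℤ).tsum_eq g]
    exact tsum_congr hg
  linarith

theorem hasSum_mul_cos_sub (hf : Summable f) (heven : Function.Even f) (x y : ℝ) :
    HasSum (fun j : ℤ ↦ f j * Real.cos (j * x - y)) (Real.cos y * cosineSeries f x) := by
  have bounded {g : ℤ → ℝ} (hg : ∀ j, |g j| ≤ 1) : Summable fun j ↦ f j * g j :=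
    .of_norm_bounded hf.norm fun j ↦ by
      simpa [abs_mul] using mul_le_of_le_one_right (abs_nonneg (f j)) (hg j)
  have cos_sum : HasSum (fun j : ℤ ↦ f j * Real.cos (j * x)) (cosineSeries f x) :=
    (bounded fun j ↦ Real.abs_cos_le_one _).hasSum
  have sin_sum : HasSum (fun j : ℤ ↦ f j * Real.sin (j * x)) 0 := by
    have h : Summable fun j : ℤ ↦ f j * Real.sin (j * x) :=
      bounded fun j ↦ Real.abs_sin_le_one _
    have hodd : Function.Odd fun j : ℤ ↦ f j * Real.sin (j * x) := fun j ↦ by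
      simp [heven j]
    simpa only [tsum_eq_zero_of_odd hodd] using h.hasSum
  refine hasSum_of_eq ((cos_sum.mul_left (Real.cos y)).add (sin_sum.mul_left (Real.sin y)))
    (fun j ↦ ?_) (by ring)
  rw [Real.cos_sub]
  ring

theorem sum_range_cos_two_pi_mul_div (N : ℕ) [NeZero N] (k : ℤ) :
    ∑ r ∈ Finset.range N, Real.cos (2 * π * r * k / N) = if (N : ℤ) ∣ k then (N : ℝ) else 0 := by
  set ζ := Complex.exp (2 * π * Complex.I / N) with hζ
  have primitive : IsPrimitiveRoot ζ N := Complex.isPrimitiveRoot_exp N (NeZero.ne N)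
  have cos_eq (r : ℕ) : Real.cos (2 * π * r * k / N) = ((ζ ^ k) ^ r).re := by
    rw [hζ, ← Complex.exp_int_mul, ← Complex.exp_nat_mul, ← Complex.exp_ofReal_mul_I_re]
    congr 2
    push_cast
    ring
  simp only [cos_eq, ← Complex.re_sum]
  split_ifs with hk
  · rw [(primitive.zpow_eq_one_iff_dvd k).2 hk]
    simp
  · have hne : ζ ^ k ≠ 1 := mt (primitive.zpow_eq_one_iff_dvd k).1 hk
    rw [geom_sum_eq hne, ← zpow_natCast, zpow_comm, zpow_natCast, primitive.pow_eq_one]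
    simp

theorem hasSum_arithmeticProgression (hf : Summable f) (heven : Function.Even f)
    (N : ℕ) [NeZero N] (a : ℤ) :
    HasSum (fun n : ℤ ↦ f (N * n + a))
      ((∑ r ∈ Finset.range N,
        Real.cos (2 * π * r * a / N) * cosineSeries f (2 * π * r / N)) / N) := by
  have hN : (N : ℤ) ≠ 0 := NeZero.ne _
  have injective_progression : Function.Injective fun n : ℤ ↦ N * n + a :=
    (add_left_injective a).comp (mul_right_injective₀ hN)
  have indicator : HasSum (fun j : ℤ ↦ f j * (if (N : ℤ) ∣ j - a then (N : ℝ) else 0) / N)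
      ((∑ r ∈ Finset.range N,
        Real.cos (2 * π * r * a / N) * cosineSeries f (2 * π * r / N)) / N) := by
    refine (hasSum_of_eq (hasSum_sum (s := .range N) fun r _ ↦
      hasSum_mul_cos_sub hf heven (2 * π * r / N) (2 * π * r * a / N)) (fun j ↦ ?_) rfl).div_const
      (N : ℝ)
    rw [← sum_range_cos_two_pi_mul_div, Finset.mul_sum]
    refine Finset.sum_congr rfl fun r _ ↦ ?_
    congr 2
    push_cast
    ring
  rw [← injective_progression.hasSum_iff fun j hj ↦ ?_] at indicator
  · refine hasSum_of_eq indicator (fun n ↦ ?_) rfl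
    simp
  · rw [if_neg, mul_zero, zero_div]
    rintro ⟨n, hn⟩
    exact hj ⟨n, by linarith⟩

end CosineSeries

section LogarithmicLambertSeries

open Complex

variable {a b : ℂ}

theorem summable_log_taylor_geometric (ha : ‖a‖ < 1) (hb : ‖b‖ < 1) :
    Summable fun p : ℕ × ℕ ↦ (-1) ^ (p.1 + 1) * (a * b ^ p.2) ^ p.1 / p.1 := by
  have geometric : Summable fun p : ℕ × ℕ ↦ ‖a‖ ^ p.1 * ‖b‖ ^ p.2 :=
    (summable_geometric_of_lt_one (norm_nonneg a) ha).mul_of_nonneg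
      (summable_geometric_of_lt_one (norm_nonneg b) hb) (fun _ ↦ by positivity)
      fun _ ↦ by positivity
  refine .of_norm_bounded geometric ?_
  rintro ⟨j, k⟩
  rcases Nat.eq_zero_or_pos j with rfl | hj
  · simp only [Nat.cast_zero, div_zero, norm_zero]
    positivity
  · have hj' : (1 : ℝ) ≤ j := mod_cast hj
    have hb' : (‖b‖ ^ k) ^ j ≤ ‖b‖ ^ k :=
      pow_le_of_le_one (by positivity) (pow_le_one₀ (norm_nonneg b) hb.le) hj.ne'
    simp only [norm_div, norm_mul, norm_pow, norm_neg, norm_one, one_pow, one_mul, norm_natCast,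
      mul_pow]
    calc ‖a‖ ^ j * (‖b‖ ^ k) ^ j / j ≤ ‖a‖ ^ j * (‖b‖ ^ k) ^ j :=
          div_le_self (by positivity) hj'
      _ ≤ ‖a‖ ^ j * ‖b‖ ^ k := by gcongr

theorem norm_mul_pow_lt_one (ha : ‖a‖ < 1) (hb : ‖b‖ < 1) (k : ℕ) : ‖a * b ^ k‖ < 1 := by
  rw [norm_mul, norm_pow]
  exact (mul_le_of_le_one_right (norm_nonneg a) (pow_le_one₀ (norm_nonneg b) hb.le)).trans_lt ha

theorem hasSum_log_one_add_geometric (ha : ‖a‖ < 1) (hb : ‖b‖ < 1) :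
    HasSum (fun k : ℕ ↦ log (1 + a * b ^ k))
      (∑' p : ℕ × ℕ, (-1) ^ (p.1 + 1) * (a * b ^ p.2) ^ p.1 / p.1) := by
  have double_series := (summable_log_taylor_geometric ha hb).hasSum
  rw [← (Equiv.prodComm ℕ ℕ).hasSum_iff] at double_series
  refine double_series.prod_fiberwise fun k ↦ ?_
  simp only [Function.comp_apply, Equiv.prodComm_apply, Prod.swap_prod_mk]
  exact hasSum_taylorSeries_log (norm_mul_pow_lt_one ha hb k)

theorem hasSum_lambert_log (ha : ‖a‖ < 1) (hb : ‖b‖ < 1) :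
    HasSum (fun j : ℕ ↦ (-1) ^ (j + 1) * a ^ j / (j * (1 - b ^ j)))
      (∑' k : ℕ, log (1 + a * b ^ k)) := by
  rw [(hasSum_log_one_add_geometric ha hb).tsum_eq]
  refine (summable_log_taylor_geometric ha hb).hasSum.prod_fiberwise fun j ↦ ?_
  rcases eq_or_ne j 0 with rfl | hj
  · simp
  · have hbj : ‖b ^ j‖ < 1 := by rw [norm_pow]; exact pow_lt_one₀ (norm_nonneg b) hb hj
    refine hasSum_of_eq ((hasSum_geometric_of_norm_lt_one hbj).mul_left
      ((-1) ^ (j + 1) * a ^ j / j)) (fun k ↦ ?_) ?_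
    · rw [mul_pow, pow_right_comm]
      ring
    · rw [← div_div, div_eq_mul_inv _ (1 - b ^ j)]

end LogarithmicLambertSeries

section CosechCoefficients

/-- The coefficients `(-1) ^ (j + 1) / (j sinh (π y j))`, with the junk value `0` at `j = 0`. Up to
the factor `π` they are the inner sums of the theorem, and they are the Fourier coefficients of the
logarithm of the theta function of `τ = y i`. -/
noncomputable def cosechCoeff (y : ℝ) (j : ℤ) : ℝ :=
  (-1) ^ (j + 1) / (j * Real.sinh (π * y * j))

variable {y : ℝ}

theorem cosechCoeff_even (y : ℝ) : Function.Even (cosechCoeff y) := fun j ↦ by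
  have parity : (-1 : ℝ) ^ (-j + 1) = (-1) ^ (j + 1) := by
    rw [zpow_add₀ (by norm_num), zpow_neg, zpow_add₀ (by norm_num), ← inv_zpow]
    norm_num
  rw [cosechCoeff, cosechCoeff, parity]
  push_cast
  rw [mul_neg, Real.sinh_neg, neg_mul_neg]

theorem norm_exp_neg_add_mul_I_lt_one (hy : 0 < y) (x : ℝ) :
    ‖Complex.exp (-(π * y) + x * Complex.I)‖ < 1 := by
  have : 0 < π * y := by positivity
  simpa [Complex.norm_exp] using this

theorem norm_exp_neg_two_mul_lt_one (hy : 0 < y) : ‖Complex.exp (-(2 * (π * y)))‖ < 1 := by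
  have : 0 < π * y := by positivity
  simpa [Complex.norm_exp] using this

theorem re_lambert_log_term (y x : ℝ) (j : ℕ) :
    ((-1) ^ (j + 1) * Complex.exp (-(π * y) + x * Complex.I) ^ j /
      (j * (1 - Complex.exp (-(2 * (π * y))) ^ j))).re =
      cosechCoeff y j * Real.cos (j * x) / 2 := by
  set u : ℂ := Complex.exp (-(π * y * j)) with hu
  have hu0 : u ≠ 0 := Complex.exp_ne_zero _
  have pow_a : Complex.exp (-(π * y) + x * Complex.I) ^ j = u * Complex.exp ((j * x : ℝ) * .I) := by
    rw [hu, ← Complex.exp_nat_mul, ← Complex.exp_add]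
    congr 1
    push_cast
    ring
  have pow_b : Complex.exp (-(2 * (π * y))) ^ j = u ^ 2 := by
    rw [hu, ← Complex.exp_nat_mul, ← Complex.exp_nat_mul]
    congr 1
    push_cast
    ring
  have sinh_eq : (Real.sinh (π * y * j) : ℂ) = (1 - u ^ 2) / (2 * u) := by
    have inv_u : Complex.exp (π * y * j) = u⁻¹ := by rw [hu, Complex.exp_neg, inv_inv]
    push_cast
    rw [Complex.sinh, ← hu, inv_u]
    field_simp
  have real_multiple : (-1) ^ (j + 1) * Complex.exp (-(π * y) + x * Complex.I) ^ j /
      (j * (1 - Complex.exp (-(2 * (π * y))) ^ j)) =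
      (cosechCoeff y j / 2 : ℝ) * Complex.exp ((j * x : ℝ) * .I) := by
    rw [pow_a, pow_b, cosechCoeff, Int.cast_natCast, Complex.ofReal_div, Complex.ofReal_div,
      Complex.ofReal_mul (j : ℝ) (Real.sinh _), sinh_eq, ← Nat.cast_succ, zpow_natCast]
    push_cast
    field_simp
  rw [real_multiple, Complex.re_ofReal_mul, Complex.exp_ofReal_mul_I_re]
  ring

theorem hasSum_cosechCoeff_mul_cos (hy : 0 < y) (x : ℝ) :
    HasSum (fun j : ℤ ↦ cosechCoeff y j * Real.cos (j * x))
      (4 * (∑' k : ℕ, Complex.log (1 + Complex.exp (-(π * y) + x * Complex.I) *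
        Complex.exp (-(2 * (π * y))) ^ k)).re) := by
  have nonneg : HasSum (fun j : ℕ ↦ cosechCoeff y j * Real.cos (j * x))
      (2 * (∑' k : ℕ, Complex.log (1 + Complex.exp (-(π * y) + x * Complex.I) *
        Complex.exp (-(2 * (π * y))) ^ k)).re) := by
    refine hasSum_of_eq ((Complex.hasSum_re (hasSum_lambert_log
      (norm_exp_neg_add_mul_I_lt_one hy x) (norm_exp_neg_two_mul_lt_one hy))).mul_left 2)
      (fun j ↦ ?_) rfl
    rw [re_lambert_log_term]
    ring
  refine hasSum_of_eq (HasSum.of_nat_of_neg (hasSum_of_eq nonneg (fun j ↦ ?_) rfl)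
    (hasSum_of_eq nonneg (fun j ↦ ?_) rfl)) (fun _ ↦ rfl) ?_
  · rw [Int.cast_natCast]
  · rw [cosechCoeff_even, Int.cast_neg, neg_mul, Real.cos_neg, Int.cast_natCast]
  · simp only [cosechCoeff, Int.cast_zero]
    ring

theorem summable_cosechCoeff (hy : 0 < y) : Summable (cosechCoeff y) := by
  simpa using (hasSum_cosechCoeff_mul_cos hy 0).summable

/-- The `k`-th factor `1 + 2 q ^ (2k+1) cos x + q ^ (4k+2)` of Jacobi's product for the theta
function of nome `q = exp (-π y)`. -/
noncomputable def thetaFactor (y x : ℝ) (k : ℕ) : ℝ :=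
  1 + 2 * Real.exp (-(π * y)) ^ (2 * k + 1) * Real.cos x +
    (Real.exp (-(π * y)) ^ (2 * k + 1)) ^ 2

theorem thetaFactor_pos (hy : 0 < y) (x : ℝ) (k : ℕ) : 0 < thetaFactor y x k := by
  have hr : Real.exp (-(π * y)) ^ (2 * k + 1) < 1 :=
    pow_lt_one₀ (Real.exp_pos _).le (Real.exp_lt_one_iff.2 (by simpa using by positivity)) (by lia)
  rw [thetaFactor]
  nlinarith [mul_nonneg (pow_pos (Real.exp_pos (-(π * y))) (2 * k + 1)).le
    (neg_le_iff_add_nonneg.1 (Real.neg_one_le_cos x)), sq_pos_of_pos (sub_pos.2 hr)]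

theorem two_mul_re_log_eq_log_thetaFactor (y x : ℝ) (k : ℕ) :
    2 * (Complex.log (1 + Complex.exp (-(π * y) + x * Complex.I) *
      Complex.exp (-(2 * (π * y))) ^ k)).re = Real.log (thetaFactor y x k) := by
  have polar : Complex.exp (-(π * y) + x * Complex.I) * Complex.exp (-(2 * (π * y))) ^ k =
      (Real.exp (-(π * y)) ^ (2 * k + 1) : ℝ) * Complex.exp (x * .I) := by
    push_cast
    rw [Complex.exp_add, ← Complex.exp_nat_mul, ← Complex.exp_nat_mul, mul_right_comm,
      ← Complex.exp_add]
    congr 2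
    push_cast
    ring
  rw [polar, Complex.log_re, ← Nat.cast_two, ← Real.log_pow, Complex.sq_norm, thetaFactor,
    Complex.normSq_apply, Complex.add_re, Complex.add_im, Complex.re_ofReal_mul,
    Complex.im_ofReal_mul, Complex.exp_ofReal_mul_I_re, Complex.exp_ofReal_mul_I_im]
  congr 1
  simp only [Complex.one_re, Complex.one_im]
  linear_combination (Real.exp (-(π * y)) ^ (2 * k + 1)) ^ 2 * Real.sin_sq_add_cos_sq x

theorem hasSum_log_thetaFactor (hy : 0 < y) (x : ℝ) :
    HasSum (fun k ↦ Real.log (thetaFactor y x k)) (cosineSeries (cosechCoeff y) x / 2) := by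
  have log_series := hasSum_log_one_add_geometric (norm_exp_neg_add_mul_I_lt_one hy x)
    (norm_exp_neg_two_mul_lt_one hy)
  refine hasSum_of_eq ((Complex.hasSum_re log_series).mul_left 2)
    (fun k ↦ (two_mul_re_log_eq_log_thetaFactor y x k).symm) ?_
  rw [cosineSeries, (hasSum_cosechCoeff_mul_cos hy x).tsum_eq, log_series.tsum_eq]
  ring

theorem cosineSeries_cosechCoeff_lt (hy : 0 < y) {s t : ℝ} (h : Real.cos s < Real.cos t) :
    cosineSeries (cosechCoeff y) s < cosineSeries (cosechCoeff y) t := by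
  have log_lt (k : ℕ) : Real.log (thetaFactor y s k) < Real.log (thetaFactor y t k) := by
    refine Real.log_lt_log (thetaFactor_pos hy s k) ?_
    rw [thetaFactor, thetaFactor]
    gcongr
  have := hasSum_lt (fun k ↦ (log_lt k).le) (log_lt 0)
    (hasSum_log_thetaFactor hy s) (hasSum_log_thetaFactor hy t)
  linarith

end CosechCoefficients

section GaussianBinomials

variable {K : Type*} [Field K]

/-- The partial Euler product `(1 - Q) (1 - Q ^ 2) ⋯ (1 - Q ^ n)`. -/
def eulerProd (Q : K) (n : ℕ) : K := ∏ i ∈ Finset.range n, (1 - Q ^ (i + 1))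

/-- The reciprocal of `eulerProd`, extended by `0` to negative indices; with this convention the
recurrence `invEulerProd_sub_one` holds at every integer. -/
def invEulerProd (Q : K) : ℤ → K
  | Int.ofNat n => (eulerProd Q n)⁻¹
  | Int.negSucc _ => 0

/-- The Gaussian binomial coefficient of `2N` over `N + n`, which is `0` unless `-N ≤ n ≤ N`. -/
def centralGaussBinom (Q : K) (N : ℕ) (n : ℤ) : K :=
  eulerProd Q (2 * N) * invEulerProd Q (N + n) * invEulerProd Q (N - n)

variable {Q : K}

theorem invEulerProd_natCast (Q : K) (n : ℕ) : invEulerProd Q n = (eulerProd Q n)⁻¹ := rfl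

theorem invEulerProd_of_neg (Q : K) {k : ℤ} (hk : k < 0) : invEulerProd Q k = 0 := by
  obtain ⟨n, rfl⟩ := Int.eq_negSucc_of_lt_zero hk
  rfl

theorem eulerProd_succ (Q : K) (n : ℕ) :
    eulerProd Q (n + 1) = eulerProd Q n * (1 - Q ^ (n + 1)) :=
  Finset.prod_range_succ _ _

theorem invEulerProd_sub_one (hQ : ∀ n : ℕ, Q ^ (n + 1) ≠ 1) (k : ℤ) :
    invEulerProd Q (k - 1) = (1 - Q ^ k) * invEulerProd Q k := by
  rcases lt_trichotomy k 0 with hk | rfl | hk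
  · rw [invEulerProd_of_neg Q hk, invEulerProd_of_neg Q (by lia), mul_zero]
  · rw [invEulerProd_of_neg Q (by lia), zpow_zero, sub_self, zero_mul]
  · obtain ⟨n, rfl⟩ : ∃ n : ℕ, k = (n + 1 : ℕ) := ⟨(k - 1).toNat, by lia⟩
    have hn : 1 - Q ^ (n + 1) ≠ 0 := sub_ne_zero.2 (hQ n).symm
    rw [Nat.cast_succ, add_sub_cancel_right, ← Nat.cast_succ, invEulerProd_natCast,
      invEulerProd_natCast, eulerProd_succ, zpow_natCast, mul_inv_rev, mul_inv_cancel_left₀ hn]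

theorem centralGaussBinom_zero (Q : K) (n : ℤ) :
    centralGaussBinom Q 0 n = if n = 0 then 1 else 0 := by
  split_ifs with hn
  · subst hn
    have h : invEulerProd Q 0 = 1 := by simpa [eulerProd] using invEulerProd_natCast Q 0
    simp [centralGaussBinom, eulerProd, h]
  · rcases lt_or_gt_of_ne hn with hn | hn
    · rw [centralGaussBinom, invEulerProd_of_neg Q (k := (0 : ℕ) + n) (by lia)]
      ring
    · rw [centralGaussBinom, invEulerProd_of_neg Q (k := (0 : ℕ) - n) (by lia)]
      ring

theorem centralGaussBinom_succ (hQ : ∀ n : ℕ, Q ^ (n + 1) ≠ 1) (hQ0 : Q ≠ 0) (N : ℕ) (n : ℤ) :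
    centralGaussBinom Q (N + 1) n = (1 + Q ^ (2 * N + 1)) * centralGaussBinom Q N n +
      Q ^ ((N : ℤ) + 1 - n) * centralGaussBinom Q N (n - 1) +
      Q ^ ((N : ℤ) + 1 + n) * centralGaussBinom Q N (n + 1) := by
  set X := Q ^ ((N : ℤ) + n) with hX
  set Y := Q ^ ((N : ℤ) - n) with hY
  have hX' : Q ^ ((N : ℤ) + 1 + n) = X * Q := by rw [hX, ← zpow_add_one₀ hQ0]; congr 1; ring
  have hY' : Q ^ ((N : ℤ) + 1 - n) = Y * Q := by rw [hY, ← zpow_add_one₀ hQ0]; congr 1; ring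
  have hXY : Q ^ (2 * N + 1) = X * Y * Q := by
    rw [hX, hY, ← zpow_add₀ hQ0, ← zpow_add_one₀ hQ0, ← zpow_natCast]
    congr 1
    push_cast
    ring
  have above : invEulerProd Q (N + n) = (1 - X * Q) * invEulerProd Q (N + 1 + n) := by
    rw [← hX', ← invEulerProd_sub_one hQ]; congr 1; ring
  have below : invEulerProd Q (N - n) = (1 - Y * Q) * invEulerProd Q (N + 1 - n) := by
    rw [← hY', ← invEulerProd_sub_one hQ]; congr 1; ring
  have above' : invEulerProd Q (N + (n - 1)) = (1 - X) * invEulerProd Q (N + n) := by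
    rw [hX, ← invEulerProd_sub_one hQ, add_sub_assoc]
  have below' : invEulerProd Q (N - (n + 1)) = (1 - Y) * invEulerProd Q (N - n) := by
    rw [hY, ← invEulerProd_sub_one hQ, sub_sub]
  have euler : eulerProd Q (2 * (N + 1)) =
      eulerProd Q (2 * N) * (1 - X * Y * Q) * (1 - X * Y * Q * Q) := by
    rw [mul_add_one, eulerProd_succ, eulerProd_succ, pow_succ Q (2 * N + 1), hXY]
  simp only [centralGaussBinom]
  rw [above', below', above, below, euler, hX', hY', hXY, Nat.cast_succ,
    show (N : ℤ) - (n - 1) = N + 1 - n by ring, show (N : ℤ) + (n + 1) = N + 1 + n by ring]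
  ring

end GaussianBinomials

section TripleProduct

section Finite

variable {K : Type*} [Field K] {q w : K}

theorem pow_mul_zpow_sub_one_sq (hq : q ≠ 0) (N : ℕ) (n : ℤ) :
    q ^ (2 * N + 1) * q ^ (n - 1) ^ 2 = (q ^ 2) ^ ((N : ℤ) + 1 - n) * q ^ n ^ 2 := by
  rw [← zpow_natCast, ← zpow_natCast q 2, ← zpow_mul, ← zpow_add₀ hq, ← zpow_add₀ hq]
  congr 1
  push_cast
  ring

theorem hasSum_centralGaussBinom_mul [TopologicalSpace K] [IsTopologicalRing K]
    (hq : q ≠ 0) (hw : w ≠ 0) (hQ : ∀ n : ℕ, (q ^ 2) ^ (n + 1) ≠ 1) (N : ℕ) :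
    HasSum (fun n : ℤ ↦ centralGaussBinom (q ^ 2) N n * (q ^ n ^ 2 * w ^ n))
      (∏ k ∈ Finset.range N, ((1 + q ^ (2 * k + 1) * w) * (1 + q ^ (2 * k + 1) * w⁻¹))) := by
  induction N with
  | zero =>
    refine hasSum_of_eq (hasSum_ite_eq (0 : ℤ) (1 : K)) (fun n ↦ ?_) rfl
    rw [centralGaussBinom_zero]
    split_ifs with hn
    · simp [hn]
    · rw [zero_mul]
  | succ N ih =>
    have lower := ((Equiv.subRight (1 : ℤ)).hasSum_iff.2 ih).mul_left (q ^ (2 * N + 1) * w)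
    have upper := ((Equiv.addRight (1 : ℤ)).hasSum_iff.2 ih).mul_left (q ^ (2 * N + 1) * w⁻¹)
    refine hasSum_of_eq (((ih.mul_left (1 + (q ^ 2) ^ (2 * N + 1))).add lower).add upper)
      (fun n ↦ ?_) ?_
    · have hlower := pow_mul_zpow_sub_one_sq hq N n
      have hupper := pow_mul_zpow_sub_one_sq hq N (-n)
      rw [← neg_add', neg_sq, neg_sq, sub_neg_eq_add] at hupper
      simp only [Function.comp_apply, Equiv.subRight_apply, Equiv.coe_addRight]
      rw [centralGaussBinom_succ hQ (pow_ne_zero 2 hq), zpow_sub_one₀ hw, zpow_add_one₀ hw]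
      linear_combination (-centralGaussBinom (q ^ 2) N (n - 1) * w ^ n) * hlower -
        centralGaussBinom (q ^ 2) N (n + 1) * w ^ n * hupper -
        (centralGaussBinom (q ^ 2) N (n - 1) * (q ^ (2 * N + 1) * q ^ (n - 1) ^ 2) * w ^ n +
        centralGaussBinom (q ^ 2) N (n + 1) * (q ^ (2 * N + 1) * q ^ (n + 1) ^ 2) * w ^ n) *
          mul_inv_cancel₀ hw
    · rw [Finset.prod_range_succ]
      linear_combination (∏ k ∈ Finset.range N, ((1 + q ^ (2 * k + 1) * w) *
        (1 + q ^ (2 * k + 1) * w⁻¹))) * (q ^ (2 * N + 1)) ^ 2 * mul_inv_cancel₀ hw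

end Finite

open Complex

theorem jacobiTheta₂_term_eq (n : ℤ) (z τ : ℂ) :
    jacobiTheta₂_term n z τ = cexp (π * I * τ) ^ n ^ 2 * cexp (2 * π * I * z) ^ n := by
  rw [jacobiTheta₂_term, ← exp_int_mul, ← exp_int_mul, ← exp_add]
  congr 1
  push_cast
  ring

variable {Q : ℂ}

theorem tendsto_eulerProd (hQ : ‖Q‖ < 1) :
    Tendsto (eulerProd Q) atTop (nhds (∏' n : ℕ, (1 - Q ^ (n + 1)))) :=
  (ModularForm.multipliable_one_sub_pow hQ).hasProd.tendsto_prod_nat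

theorem pow_succ_ne_one_of_norm_lt_one (hQ : ‖Q‖ < 1) (n : ℕ) : Q ^ (n + 1) ≠ 1 := fun h ↦
  (pow_lt_one₀ (norm_nonneg Q) hQ n.succ_ne_zero).ne (by rw [← norm_pow, h, norm_one])

theorem tprod_one_sub_pow_ne_zero (hQ : ‖Q‖ < 1) : ∏' n : ℕ, (1 - Q ^ (n + 1)) ≠ 0 := by
  simp only [sub_eq_add_neg]
  refine tprod_one_add_ne_zero_of_summable (fun n ↦ ?_) ?_
  · rw [← sub_eq_add_neg]
    exact sub_ne_zero.2 (pow_succ_ne_one_of_norm_lt_one hQ n).symm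
  · simpa using (summable_nat_add_iff 1).2 (summable_geometric_of_lt_one (norm_nonneg Q) hQ)

theorem tendsto_invEulerProd_add (hQ : ‖Q‖ < 1) (n : ℤ) :
    Tendsto (fun N : ℕ ↦ invEulerProd Q (N + n)) atTop
      (nhds (∏' n : ℕ, (1 - Q ^ (n + 1)))⁻¹) := by
  have shift : Tendsto (fun N : ℕ ↦ ((N : ℤ) + n).toNat) atTop atTop :=
    tendsto_atTop.2 fun b ↦ by
      filter_upwards [eventually_ge_atTop (b + n.natAbs)] with N hN
      lia
  refine (((tendsto_eulerProd hQ).comp shift).inv₀ (tprod_one_sub_pow_ne_zero hQ)).congr' ?_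
  filter_upwards [eventually_ge_atTop n.natAbs] with N hN
  rw [Function.comp_apply, ← invEulerProd_natCast, Int.toNat_of_nonneg (by lia)]

theorem tendsto_centralGaussBinom (hQ : ‖Q‖ < 1) (n : ℤ) :
    Tendsto (fun N ↦ centralGaussBinom Q N n) atTop (nhds (∏' n : ℕ, (1 - Q ^ (n + 1)))⁻¹) := by
  have even_indices : Tendsto (fun N : ℕ ↦ 2 * N) atTop atTop :=
    tendsto_id.const_mul_atTop' two_pos
  have h := (((tendsto_eulerProd hQ).comp even_indices).mul
    (tendsto_invEulerProd_add hQ n)).mul (tendsto_invEulerProd_add hQ (-n))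
  rwa [mul_inv_cancel₀ (tprod_one_sub_pow_ne_zero hQ), one_mul] at h

theorem exists_norm_centralGaussBinom_le (hQ : ‖Q‖ < 1) :
    ∃ C, ∀ N n, ‖centralGaussBinom Q N n‖ ≤ C := by
  obtain ⟨C₁, hC₁⟩ := (Metric.isBounded_range_of_tendsto _ (tendsto_eulerProd hQ)).exists_norm_le
  obtain ⟨C₂, hC₂⟩ := (Metric.isBounded_range_of_tendsto _
    ((tendsto_eulerProd hQ).inv₀ (tprod_one_sub_pow_ne_zero hQ))).exists_norm_le
  have bound₁ (n : ℕ) : ‖eulerProd Q n‖ ≤ C₁ := hC₁ _ ⟨n, rfl⟩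
  have bound₂ : ∀ k, ‖invEulerProd Q k‖ ≤ C₂
    | Int.ofNat n => hC₂ _ ⟨n, rfl⟩
    | Int.negSucc _ => norm_zero.trans_le ((norm_nonneg _).trans (hC₂ _ ⟨0, rfl⟩))
  have hC₁' := (norm_nonneg _).trans (bound₁ 0)
  have hC₂' := (norm_nonneg _).trans (bound₂ 0)
  refine ⟨C₁ * C₂ * C₂, fun N n ↦ ?_⟩
  rw [centralGaussBinom, norm_mul, norm_mul]
  gcongr
  exacts [bound₁ _, bound₂ _, bound₂ _]

theorem norm_exp_pi_mul_I_mul_sq_lt_one {τ : ℂ} (hτ : 0 < τ.im) : ‖cexp (π * I * τ) ^ 2‖ < 1 := by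
  have : 0 < π * τ.im := by positivity
  rw [norm_pow]
  refine pow_lt_one₀ (norm_nonneg _) ?_ two_ne_zero
  simpa [norm_exp] using this

-- Jacobi's triple product: let `N → ∞` in the finite identity, by dominated convergence.
theorem tendsto_prod_jacobiTheta₂ (z : ℂ) {τ : ℂ} (hτ : 0 < τ.im) :
    Tendsto (fun N ↦ ∏ k ∈ Finset.range N, ((1 + cexp (π * I * τ) ^ (2 * k + 1) *
      cexp (2 * π * I * z)) * (1 + cexp (π * I * τ) ^ (2 * k + 1) * (cexp (2 * π * I * z))⁻¹)))
      atTop (nhds ((∏' n : ℕ, (1 - (cexp (π * I * τ) ^ 2) ^ (n + 1)))⁻¹ * jacobiTheta₂ z τ)) := by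
  have hQ := norm_exp_pi_mul_I_mul_sq_lt_one hτ
  obtain ⟨C, hC⟩ := exists_norm_centralGaussBinom_le hQ
  have finite_identity (N : ℕ) := (hasSum_centralGaussBinom_mul (exp_ne_zero (π * I * τ))
    (exp_ne_zero (2 * π * I * z)) (pow_succ_ne_one_of_norm_lt_one hQ) N).tsum_eq
  simp only [← jacobiTheta₂_term_eq] at finite_identity
  simp only [← finite_identity, jacobiTheta₂, ← tsum_mul_left]
  refine tendsto_tsum_of_dominated_convergence
    (((summable_jacobiTheta₂_term_iff z τ).2 hτ).norm.mul_left C)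
    (fun n ↦ (tendsto_centralGaussBinom hQ n).mul_const _) (.of_forall fun N n ↦ ?_)
  rw [norm_mul]
  gcongr
  exact hC N n

theorem ofReal_thetaFactor (y z : ℝ) (k : ℕ) :
    (thetaFactor y (2 * π * z) k : ℂ) =
      (1 + cexp (π * I * (y * I)) ^ (2 * k + 1) * cexp (2 * π * I * z)) *
        (1 + cexp (π * I * (y * I)) ^ (2 * k + 1) * (cexp (2 * π * I * z))⁻¹) := by
  have nome : cexp (π * I * (y * I)) = Real.exp (-(π * y)) := by
    push_cast
    congr 1
    linear_combination π * y * I_mul_I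
  have exp_add_inv : cexp (2 * π * I * z) + (cexp (2 * π * I * z))⁻¹ = 2 * cos (2 * π * z) := by
    rw [two_cos, ← exp_neg]
    ring_nf
  rw [nome, thetaFactor]
  push_cast
  linear_combination (-cexp (-(π * y)) ^ (2 * k + 1)) * exp_add_inv -
    (cexp (-(π * y)) ^ (2 * k + 1)) ^ 2 * mul_inv_cancel₀ (exp_ne_zero (2 * π * I * z))

theorem jacobiTheta₂_ofReal_eq {y : ℝ} (hy : 0 < y) (z : ℝ) :
    jacobiTheta₂ z (y * I) = (∏' n : ℕ, (1 - (cexp (π * I * (y * I)) ^ 2) ^ (n + 1))) *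
      Real.exp (cosineSeries (cosechCoeff y) (2 * π * z) / 2) := by
  have hτ : 0 < (y * I).im := by simpa using hy
  have real_product : Tendsto (fun N ↦ ∏ k ∈ Finset.range N, thetaFactor y (2 * π * z) k) atTop
      (nhds (Real.exp (cosineSeries (cosechCoeff y) (2 * π * z) / 2))) := by
    refine (hasSum_log_thetaFactor hy _).rexp.tendsto_prod_nat.congr fun N ↦ ?_
    exact Finset.prod_congr rfl fun k _ ↦ Real.exp_log (thetaFactor_pos hy _ k)
  have h := tendsto_prod_jacobiTheta₂ z hτ
  simp only [← ofReal_thetaFactor, ← ofReal_prod] at h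
  rw [← tendsto_nhds_unique h ((continuous_ofReal.tendsto _).comp real_product),
    mul_inv_cancel_left₀ (tprod_one_sub_pow_ne_zero (norm_exp_pi_mul_I_mul_sq_lt_one hτ))]

theorem jacobiTheta₂_ofReal_ne_zero {y : ℝ} (hy : 0 < y) (z : ℝ) :
    jacobiTheta₂ z (y * I) ≠ 0 := by
  have nome_lt_one := norm_exp_pi_mul_I_mul_sq_lt_one (τ := y * I) (by simpa using hy)
  rw [jacobiTheta₂_ofReal_eq hy]
  exact mul_ne_zero (tprod_one_sub_pow_ne_zero nome_lt_one) (ofReal_ne_zero.2 (Real.exp_ne_zero _))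

theorem jacobiTheta₂_ofReal_div {y : ℝ} (hy : 0 < y) (z : ℝ) :
    jacobiTheta₂ z (y * I) / jacobiTheta₂ 0 (y * I) = Real.exp
      ((cosineSeries (cosechCoeff y) (2 * π * z) - cosineSeries (cosechCoeff y) 0) / 2) := by
  have at_zero := jacobiTheta₂_ofReal_eq hy 0
  have nome_lt_one := norm_exp_pi_mul_I_mul_sq_lt_one (τ := y * I) (by simpa using hy)
  rw [mul_zero, ofReal_zero] at at_zero
  rw [jacobiTheta₂_ofReal_eq hy z, at_zero,
    mul_div_mul_left _ _ (tprod_one_sub_pow_ne_zero nome_lt_one), sub_div, Real.exp_sub, ofReal_div]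

end TripleProduct

section ThetaAddition

theorem hasSum_int_prod_of_parity {M : Type*} [AddCommMonoid M] [TopologicalSpace M]
    [ContinuousAdd M] {f : ℤ × ℤ → M} {s t : M}
    (hs : HasSum (fun p : ℤ × ℤ ↦ f (p.1 + p.2, p.1 - p.2)) s)
    (ht : HasSum (fun p : ℤ × ℤ ↦ f (p.1 + p.2 + 1, p.1 - p.2)) t) : HasSum f (s + t) := by
  set e : ℤ × ℤ → ℤ × ℤ := fun p ↦ (p.1 + p.2, p.1 - p.2)
  set o : ℤ × ℤ → ℤ × ℤ := fun p ↦ (p.1 + p.2 + 1, p.1 - p.2)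
  have injective_e : e.Injective := by
    rintro ⟨a, b⟩ ⟨c, d⟩ h
    simp only [e, Prod.mk.injEq] at h ⊢
    lia
  have injective_o : o.Injective := by
    rintro ⟨a, b⟩ ⟨c, d⟩ h
    simp only [o, Prod.mk.injEq] at h ⊢
    lia
  have isCompl : IsCompl (Set.range e) (Set.range o) := by
    constructor
    · rw [Set.disjoint_iff_forall_ne]
      rintro _ ⟨⟨a, b⟩, rfl⟩ _ ⟨⟨c, d⟩, rfl⟩ h
      simp only [e, o, Prod.mk.injEq] at h
      lia
    · rw [codisjoint_iff_le_sup]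
      rintro ⟨m, n⟩ -
      rcases Int.even_or_odd' (m + n) with ⟨a, h | h⟩
      · exact Or.inl ⟨(a, a - n), by simp only [e, Prod.mk.injEq]; lia⟩
      · exact Or.inr ⟨(a, a - n), by simp only [o, Prod.mk.injEq]; lia⟩
  exact (injective_e.hasSum_range_iff.2 hs).add_isCompl isCompl (injective_o.hasSum_range_iff.2 ht)

open Complex

/-- The theta function of half-integral characteristic
`∑ exp (2πi (n + 1/2) z + πi (n + 1/2) ^ 2 τ)`, classically `ϑ₂`; in the same notation Mathlib's
`jacobiTheta₂` is `ϑ₃`. -/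
noncomputable def halfTheta (z τ : ℂ) : ℂ :=
  cexp (π * I * (τ / 4 + z)) * jacobiTheta₂ (z + τ / 2) τ

theorem hasSum_halfTheta (z : ℂ) {τ : ℂ} (hτ : 0 < τ.im) :
    HasSum (fun n : ℤ ↦ cexp (2 * π * I * (n + 1 / 2) * z + π * I * (n + 1 / 2) ^ 2 * τ))
      (halfTheta z τ) := by
  refine hasSum_of_eq ((hasSum_jacobiTheta₂_term (z + τ / 2) hτ).mul_left
    (cexp (π * I * (τ / 4 + z)))) (fun n ↦ ?_) rfl
  rw [jacobiTheta₂_term, ← exp_add]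
  ring_nf

theorem halfTheta_add_one (z τ : ℂ) : halfTheta (z + 1) τ = -halfTheta z τ := by
  rw [halfTheta, add_right_comm, jacobiTheta₂_add_left, ← add_assoc, mul_add _ _ 1, mul_one,
    exp_add, exp_pi_mul_I, halfTheta]
  ring

theorem halfTheta_neg (z τ : ℂ) : halfTheta (-z) τ = halfTheta z τ := by
  have h : -z + τ / 2 = -((z - τ / 2)) := by ring
  have h' : z + τ / 2 = (z - τ / 2) + τ := by ring
  rw [halfTheta, halfTheta, h, jacobiTheta₂_neg_left, h', jacobiTheta₂_add_left', ← mul_assoc,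
    ← exp_add]
  ring_nf

theorem halfTheta_self (τ : ℂ) : halfTheta τ (2 * τ) =
    cexp (-(π * I * τ / 2)) * jacobiTheta₂ 0 (2 * τ) := by
  have h : τ + 2 * τ / 2 = 0 + 2 * τ := by ring
  rw [halfTheta, h, jacobiTheta₂_add_left', ← mul_assoc, ← exp_add]
  ring_nf

variable {τ : ℂ}

theorem jacobiTheta₂_add_mul_jacobiTheta₂_sub (hτ : 0 < τ.im) (x y : ℂ) :
    jacobiTheta₂ (x + y) τ * jacobiTheta₂ (x - y) τ =
      jacobiTheta₂ (2 * x) (2 * τ) * jacobiTheta₂ (2 * y) (2 * τ) +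
        halfTheta (2 * x) (2 * τ) * halfTheta (2 * y) (2 * τ) := by
  have hτ₂ : 0 < (2 * τ).im := by simpa using hτ
  have mul_hasSum {f g : ℤ → ℂ} {s t : ℂ} (hf : HasSum f s) (hg : HasSum g t) :
      HasSum (fun p : ℤ × ℤ ↦ f p.1 * g p.2) (s * t) :=
    hf.mul hg (summable_mul_of_summable_norm hf.summable.norm hg.summable.norm)
  refine (mul_hasSum (hasSum_jacobiTheta₂_term _ hτ) (hasSum_jacobiTheta₂_term _ hτ)).unique
    (hasSum_int_prod_of_parity ?_ ?_)
  · refine hasSum_of_eq (mul_hasSum (hasSum_jacobiTheta₂_term _ hτ₂)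
      (hasSum_jacobiTheta₂_term _ hτ₂)) (fun p ↦ ?_) rfl
    simp only [jacobiTheta₂_term, ← exp_add]
    push_cast
    ring_nf
  · refine hasSum_of_eq (mul_hasSum (hasSum_halfTheta _ hτ₂) (hasSum_halfTheta _ hτ₂))
      (fun p ↦ ?_) rfl
    simp only [jacobiTheta₂_term, ← exp_add]
    push_cast
    ring_nf

theorem jacobiTheta₂_sq (hτ : 0 < τ.im) (z : ℂ) :
    jacobiTheta₂ z τ ^ 2 = jacobiTheta₂ (2 * z) (2 * τ) * jacobiTheta₂ 0 (2 * τ) +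
      halfTheta (2 * z) (2 * τ) * halfTheta 0 (2 * τ) := by
  simpa [sq] using jacobiTheta₂_add_mul_jacobiTheta₂_sub hτ z 0

theorem halfTheta_zero_sq (hτ : 0 < τ.im) :
    halfTheta 0 τ ^ 2 = 2 * jacobiTheta₂ 0 (2 * τ) * halfTheta 0 (2 * τ) := by
  have h := jacobiTheta₂_sq hτ (τ / 2)
  rw [mul_div_cancel₀ τ two_ne_zero, halfTheta_self] at h
  have h₀ : jacobiTheta₂ τ (2 * τ) = cexp (-(π * I * τ / 2)) * halfTheta 0 (2 * τ) := by
    have exponent : -(π * I * τ / 2) + π * I * (2 * τ / 4 + 0) = 0 := by ring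
    rw [halfTheta, ← mul_assoc, ← exp_add, exponent, exp_zero, one_mul, zero_add,
      mul_div_cancel_left₀ τ two_ne_zero]
  have unit : cexp (π * I * (τ / 4 + 0)) ^ 2 * cexp (-(π * I * τ / 2)) = 1 := by
    have exponent : (2 : ℕ) * (π * I * (τ / 4 + 0)) + -(π * I * τ / 2) = 0 := by push_cast; ring
    rw [← exp_nat_mul, ← exp_add, exponent, exp_zero]
  rw [halfTheta, zero_add, mul_pow, h, h₀]
  linear_combination 2 * jacobiTheta₂ 0 (2 * τ) * halfTheta 0 (2 * τ) * unit

/-- The square of Jacobi's `ϑ₁ (z | τ)`, expressed through theta functions of modulus `2τ`. -/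
noncomputable def thetaOneSq (z τ : ℂ) : ℂ :=
  jacobiTheta₂ (2 * z) (2 * τ) * halfTheta 0 (2 * τ) -
    halfTheta (2 * z) (2 * τ) * jacobiTheta₂ 0 (2 * τ)

theorem thetaOneSq_neg (z τ : ℂ) : thetaOneSq (-z) τ = thetaOneSq z τ := by
  rw [thetaOneSq, mul_neg, jacobiTheta₂_neg_left, halfTheta_neg, thetaOneSq]

theorem jacobiTheta₂_two_mul_add_half (z τ : ℂ) :
    jacobiTheta₂ (2 * (z + 1 / 2)) τ = jacobiTheta₂ (2 * z) τ := by
  rw [mul_add, mul_one_div_cancel two_ne_zero, jacobiTheta₂_add_left]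

theorem halfTheta_two_mul_add_half (z τ : ℂ) :
    halfTheta (2 * (z + 1 / 2)) τ = -halfTheta (2 * z) τ := by
  rw [mul_add, mul_one_div_cancel two_ne_zero, halfTheta_add_one]

theorem thetaOneSq_add_one (z τ : ℂ) : thetaOneSq (z + 1) τ = thetaOneSq z τ := by
  rw [← add_halves (1 : ℂ), ← add_assoc, thetaOneSq, jacobiTheta₂_two_mul_add_half,
    jacobiTheta₂_two_mul_add_half, halfTheta_two_mul_add_half, halfTheta_two_mul_add_half, neg_neg,
    thetaOneSq]

theorem jacobiTheta₂_zero_sq_mul (hτ : 0 < τ.im) (z w : ℂ) :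
    jacobiTheta₂ 0 τ ^ 2 * (jacobiTheta₂ (z + w) τ * jacobiTheta₂ (z - w) τ) =
      jacobiTheta₂ z τ ^ 2 * jacobiTheta₂ w τ ^ 2 + thetaOneSq z τ * thetaOneSq w τ := by
  rw [jacobiTheta₂_add_mul_jacobiTheta₂_sub hτ, jacobiTheta₂_sq hτ, jacobiTheta₂_sq hτ z,
    jacobiTheta₂_sq hτ w, mul_zero, thetaOneSq, thetaOneSq]
  ring

end ThetaAddition

section Lemniscatic

open Complex

theorem jacobiTheta₂_half_I : jacobiTheta₂ (1 / 2) I = halfTheta 0 I := by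
  have inversion : (-1 : ℂ) / I = I := by rw [div_I, neg_one_mul, neg_neg]
  have point : (1 / 2 : ℂ) / I = -(I / 2) := by rw [div_I]; ring
  have exponent : -π * I * (1 / 2) ^ 2 / I = π * I * (I / 4 + 0) := by
    rw [mul_assoc, mul_div_assoc, mul_div_right_comm, div_self I_ne_zero]
    linear_combination (-π / 4) * I_mul_I
  rw [jacobiTheta₂_functional_equation, inversion, point, exponent, jacobiTheta₂_neg_left,
    neg_mul, I_mul_I, neg_neg, one_cpow, div_one, one_mul, halfTheta, zero_add]

theorem jacobiTheta₂_half_I_sq : jacobiTheta₂ (1 / 2) I ^ 2 =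
    2 * jacobiTheta₂ 0 (2 * I) * halfTheta 0 (2 * I) := by
  rw [jacobiTheta₂_half_I, halfTheta_zero_sq (by simp)]

theorem jacobiTheta₂_half_sq {τ : ℂ} (hτ : 0 < τ.im) : jacobiTheta₂ (1 / 2) τ ^ 2 =
    jacobiTheta₂ 0 (2 * τ) ^ 2 - halfTheta 0 (2 * τ) ^ 2 := by
  have h₁ := jacobiTheta₂_two_mul_add_half 0 (2 * τ)
  have h₂ := halfTheta_two_mul_add_half 0 (2 * τ)
  rw [zero_add, mul_zero] at h₁ h₂
  rw [jacobiTheta₂_sq hτ, h₁, h₂]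
  ring

theorem thetaOneSq_half_I : thetaOneSq (1 / 2) I = jacobiTheta₂ (1 / 2) I ^ 2 := by
  have h₁ := jacobiTheta₂_two_mul_add_half 0 (2 * I)
  have h₂ := halfTheta_two_mul_add_half 0 (2 * I)
  rw [zero_add, mul_zero] at h₁ h₂
  rw [thetaOneSq, h₁, h₂, jacobiTheta₂_half_I_sq]
  ring

theorem jacobiTheta₂_I_add_half_sq (z : ℂ) :
    jacobiTheta₂ 0 I ^ 2 * jacobiTheta₂ (z + 1 / 2) I ^ 2 =
      jacobiTheta₂ (1 / 2) I ^ 2 * (jacobiTheta₂ z I ^ 2 + thetaOneSq z I) := by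
  have period : jacobiTheta₂ (z - 1 / 2) I = jacobiTheta₂ (z + 1 / 2) I := by
    rw [← jacobiTheta₂_add_left (z - 1 / 2)]
    ring_nf
  have h := jacobiTheta₂_zero_sq_mul (τ := I) (by simp) z (1 / 2)
  rw [period, thetaOneSq_half_I] at h
  linear_combination h

theorem thetaOneSq_I_add_half (z : ℂ) : jacobiTheta₂ 0 I ^ 2 * thetaOneSq (z + 1 / 2) I =
    jacobiTheta₂ (1 / 2) I ^ 2 * (jacobiTheta₂ z I ^ 2 - thetaOneSq z I) := by
  have hI : 0 < I.im := by simp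
  have theta_zero_sq := jacobiTheta₂_sq hI 0
  rw [mul_zero] at theta_zero_sq
  have expand : thetaOneSq z I = jacobiTheta₂ (2 * z) (2 * I) * halfTheta 0 (2 * I) -
    halfTheta (2 * z) (2 * I) * jacobiTheta₂ 0 (2 * I) := rfl
  rw [mul_sub (jacobiTheta₂ _ I ^ 2)]
  nth_rewrite 1 [jacobiTheta₂_half_I_sq]
  rw [jacobiTheta₂_half_sq hI, theta_zero_sq, jacobiTheta₂_sq hI z, expand, thetaOneSq,
    jacobiTheta₂_two_mul_add_half, halfTheta_two_mul_add_half]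
  ring

theorem jacobiTheta₂_half_I_ne_zero : jacobiTheta₂ (1 / 2) I ≠ 0 := by
  simpa using jacobiTheta₂_ofReal_ne_zero one_pos (1 / 2)

theorem jacobiTheta₂_zero_I_ne_zero : jacobiTheta₂ 0 I ≠ 0 := by
  simpa using jacobiTheta₂_ofReal_ne_zero one_pos 0

theorem jacobiTheta₂_I_two_mul_add_half (z : ℂ) :
    jacobiTheta₂ 0 I ^ 4 * jacobiTheta₂ (2 * z + 1 / 2) I = jacobiTheta₂ (1 / 2) I *
      (jacobiTheta₂ z I ^ 4 + 2 * jacobiTheta₂ z I ^ 2 * thetaOneSq z I - thetaOneSq z I ^ 2) := by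
  have addition := jacobiTheta₂_zero_sq_mul (τ := I) (by simp) (z + 1 / 2) z
  rw [add_sub_cancel_left, add_right_comm, ← two_mul] at addition
  refine mul_left_cancel₀ jacobiTheta₂_half_I_ne_zero ?_
  linear_combination jacobiTheta₂ 0 I ^ 2 * addition +
    jacobiTheta₂ z I ^ 2 * jacobiTheta₂_I_add_half_sq z +
    thetaOneSq z I * thetaOneSq_I_add_half z

theorem jacobiTheta₂_I_two_mul (z : ℂ) : jacobiTheta₂ 0 I ^ 3 * jacobiTheta₂ (2 * z) I =
    jacobiTheta₂ z I ^ 4 + thetaOneSq z I ^ 2 := by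
  have addition := jacobiTheta₂_zero_sq_mul (τ := I) (by simp) z z
  rw [sub_self, ← two_mul] at addition
  linear_combination addition

theorem thetaOneSq_I_two_mul (z : ℂ) : jacobiTheta₂ 0 I ^ 6 * thetaOneSq (2 * z) I =
    4 * jacobiTheta₂ z I ^ 2 * thetaOneSq z I *
      (jacobiTheta₂ z I ^ 4 - thetaOneSq z I ^ 2) := by
  refine mul_left_cancel₀ (pow_ne_zero 2 jacobiTheta₂_half_I_ne_zero) ?_
  have shifted_sq := congrArg (· ^ 2) (jacobiTheta₂_I_two_mul_add_half z)
  have doubled_sq := congrArg (· ^ 2) (jacobiTheta₂_I_two_mul z)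
  beta_reduce at shifted_sq doubled_sq
  linear_combination shifted_sq - jacobiTheta₂ 0 I ^ 6 * jacobiTheta₂_I_add_half_sq (2 * z) -
    jacobiTheta₂ (1 / 2) I ^ 2 * doubled_sq

end Lemniscatic

section FiveTorsion

open Complex

/-- The theta function of the square lattice, normalized to take the value `1` at `0`. -/
noncomputable def normTheta (z : ℂ) : ℂ := jacobiTheta₂ z I / jacobiTheta₂ 0 I

/-- The square of `ϑ₁` for the square lattice, in the normalization of `normTheta`. -/
noncomputable def normThetaOneSq (z : ℂ) : ℂ := thetaOneSq z I / jacobiTheta₂ 0 I ^ 2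

theorem normTheta_one_sub (z : ℂ) : normTheta (1 - z) = normTheta z := by
  rw [normTheta, sub_eq_neg_add, jacobiTheta₂_add_left, jacobiTheta₂_neg_left, normTheta]

theorem normThetaOneSq_one_sub (z : ℂ) : normThetaOneSq (1 - z) = normThetaOneSq z := by
  rw [normThetaOneSq, sub_eq_neg_add, thetaOneSq_add_one, thetaOneSq_neg, normThetaOneSq]

theorem normTheta_add_mul_normTheta_sub (z w : ℂ) : normTheta (z + w) * normTheta (z - w) =
    normTheta z ^ 2 * normTheta w ^ 2 + normThetaOneSq z * normThetaOneSq w := by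
  have h₀ := jacobiTheta₂_zero_I_ne_zero
  have addition := jacobiTheta₂_zero_sq_mul (τ := I) (by simp) z w
  simp only [normTheta, normThetaOneSq]
  field_simp
  linear_combination addition

theorem normTheta_two_mul (z : ℂ) :
    normTheta (2 * z) = normTheta z ^ 4 + normThetaOneSq z ^ 2 := by
  have h₀ := jacobiTheta₂_zero_I_ne_zero
  simp only [normTheta, normThetaOneSq]
  field_simp
  linear_combination jacobiTheta₂_I_two_mul z

theorem normThetaOneSq_two_mul (z : ℂ) : normThetaOneSq (2 * z) =
    4 * normTheta z ^ 2 * normThetaOneSq z * (normTheta z ^ 4 - normThetaOneSq z ^ 2) := by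
  have h₀ := jacobiTheta₂_zero_I_ne_zero
  simp only [normTheta, normThetaOneSq]
  field_simp
  linear_combination thetaOneSq_I_two_mul z

/-- The relations satisfied by the values `T`, `U` of `normTheta` and `b`, `c` of `normThetaOneSq`
at `z` and `2 * z` when `5 * z = 1`. -/
structure IsFiveTorsion {K : Type*} [Field K] (T U b c : K) : Prop where
  theta_double : U = T ^ 4 + b ^ 2
  theta_double_double : T = U ^ 4 + c ^ 2
  theta_mul : U * T = U ^ 2 * T ^ 2 + c * b
  thetaOneSq_double : c = 4 * T ^ 2 * b * (T ^ 4 - b ^ 2)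
  thetaOneSq_double_double : b = 4 * U ^ 2 * c * (U ^ 4 - c ^ 2)

theorem isFiveTorsion_normTheta : IsFiveTorsion (normTheta (1 / 5)) (normTheta (2 / 5))
    (normThetaOneSq (1 / 5)) (normThetaOneSq (2 / 5)) := by
  have two_fifths : (2 / 5 : ℂ) = 2 * (1 / 5) := by norm_num
  have one_fifth : (1 - 1 / 5 : ℂ) = 2 * (2 / 5) := by norm_num
  have three_fifths : (1 - 2 / 5 : ℂ) = 2 / 5 + 1 / 5 := by norm_num
  have difference : (2 / 5 - 1 / 5 : ℂ) = 1 / 5 := by norm_num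
  refine ⟨?_, ?_, ?_, ?_, ?_⟩
  · rw [two_fifths, normTheta_two_mul]
  · rw [← normTheta_one_sub, one_fifth, normTheta_two_mul]
  · rw [← normTheta_add_mul_normTheta_sub, difference, ← three_fifths, normTheta_one_sub]
  · rw [two_fifths, normThetaOneSq_two_mul]
  · rw [← normThetaOneSq_one_sub, one_fifth, normThetaOneSq_two_mul]

namespace IsFiveTorsion

variable {K : Type*} [Field K] {T U b c : K}

theorem pow_five_add_pow_five (h : IsFiveTorsion T U b c) :
    T ^ 5 + U ^ 5 = T * U - (T * U) ^ 2 + 2 * (T * U) ^ 3 := by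
  obtain ⟨h₁, h₂, h₃, -, -⟩ := h
  linear_combination (-(c ^ 2)) * h₁ - (U - T ^ 4) * h₂ + (U * T - U ^ 2 * T ^ 2 + c * b) * h₃

theorem quadratic_mul_eq_zero (h : IsFiveTorsion T U b c) (hTU : T * U ≠ 0) (hne : T ^ 5 ≠ U ^ 5) :
    4 * (T * U) ^ 2 - 2 * (T * U) - 1 = 0 := by
  have sum_pow := h.pow_five_add_pow_five
  obtain ⟨h₁, h₂, h₃, h₄, h₅⟩ := h
  have sq_c : T - U ^ 4 = 4 * T ^ 2 * (T * U - (T * U) ^ 2) * (2 * T ^ 4 - U) := by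
    linear_combination h₂ + c * h₄ - 4 * T ^ 2 * (2 * T ^ 4 - U) * h₃ + 4 * T ^ 2 * c * b * h₁
  have sq_b : U - T ^ 4 = 4 * U ^ 2 * (T * U - (T * U) ^ 2) * (2 * U ^ 4 - T) := by
    linear_combination h₁ + b * h₅ - 4 * U ^ 2 * (2 * U ^ 4 - T) * h₃ + 4 * U ^ 2 * c * b * h₂
  have factored : (T ^ 5 - U ^ 5) * ((T * U) ^ 2 * (4 * (T * U) ^ 2 - 2 * (T * U) - 1)) = 0 := by
    linear_combination U ^ 6 * sq_c - T ^ 6 * sq_b - (T ^ 5 - U ^ 5) * sum_pow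
  simpa [sub_ne_zero.2 hne, hTU] using factored

end IsFiveTorsion

end FiveTorsion

section SpecialValues

theorem sqrt_five_sub_one_eq_inv {p : ℝ} (hp : 0 < p) (h : 4 * p ^ 2 - 2 * p - 1 = 0) :
    √5 - 1 = p⁻¹ := by
  have inv_eq : p⁻¹ = 4 * p - 2 := inv_eq_of_mul_eq_one_right (by linear_combination h)
  have sqrt_eq : √5 = 4 * p - 1 := by
    rw [Real.sqrt_eq_iff_mul_self_eq_of_pos (by linarith [inv_pos.2 hp])]
    linear_combination 4 * h
  rw [sqrt_eq, inv_eq]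
  ring

theorem one_add_div_pow_five_sq {a b : ℝ} (ha : 0 < a) (hb : 0 < b)
    (quadratic : 4 * (a * b) ^ 2 - 2 * (a * b) - 1 = 0)
    (sum_pow : a ^ 5 + b ^ 5 = a * b - (a * b) ^ 2 + 2 * (a * b) ^ 3) :
    (1 + (b / a) ^ 5) ^ 2 = (18 * √5 - 36) * (b / a) ^ 5 := by
  have sq_sqrt_five : √5 ^ 2 = 5 := Real.sq_sqrt (by norm_num)
  have mul_eq_one : a * b * (√5 - 1) = 1 := by
    rw [sqrt_five_sub_one_eq_inv (by positivity) quadratic, mul_inv_cancel₀ (by positivity)]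
  have mul_pow_five : (b / a) ^ 5 * a ^ 5 = b ^ 5 := by
    rw [← mul_pow, div_mul_cancel₀ _ ha.ne']
  generalize (b / a) ^ 5 = R at *
  have sum_eq : (1 + R) * a ^ 5 = 3 / 2 * (a * b) := by
    linear_combination mul_pow_five + sum_pow + (a * b) / 2 * quadratic
  calc (1 + R) ^ 2 = (1 + R) ^ 2 * (a * b * (√5 - 1)) ^ 5 := by rw [mul_eq_one, one_pow, mul_one]
    _ = (3 / 2 * (a * b)) ^ 2 * R * (√5 - 1) ^ 5 := by
      rw [← sum_eq]
      linear_combination -(1 + R) ^ 2 * (√5 - 1) ^ 5 * a ^ 5 * mul_pow_five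
    _ = 9 / 4 * R * (√5 - 1) ^ 3 * (a * b * (√5 - 1)) ^ 2 := by ring
    _ = (18 * √5 - 36) * R := by
      rw [mul_eq_one]
      linear_combination 9 / 4 * R * (√5 - 3) * sq_sqrt_five

theorem div_pow_five_eq {a b : ℝ} (hb : 0 < b) (hab : b < a)
    (quadratic : 4 * (a * b) ^ 2 - 2 * (a * b) - 1 = 0)
    (sum_pow : a ^ 5 + b ^ 5 = a * b - (a * b) ^ 2 + 2 * (a * b) ^ 3) :
    (b / a) ^ 5 = -19 + 9 * √5 - 3 * √(85 - 38 * √5) := by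
  have ha : 0 < a := hb.trans hab
  have reciprocal := one_add_div_pow_five_sq ha hb quadratic sum_pow
  have lt_one : (b / a) ^ 5 < 1 :=
    pow_lt_one₀ (by positivity) ((div_lt_one ha).2 hab) (by norm_num)
  have lt_sqrt_five : 20 / 9 < √5 := Real.lt_sqrt_of_sq_lt (by norm_num)
  have discriminant : 85 - 38 * √5 = ((9 * √5 - 19 - (b / a) ^ 5) / 3) ^ 2 := by
    linear_combination (-1 / 9) * reciprocal - 9 * Real.sq_sqrt (show (0 : ℝ) ≤ 5 by norm_num)
  rw [discriminant, Real.sqrt_sq (by linarith)]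
  ring

theorem cos_two_pi_div_five : Real.cos (2 * π / 5) = (√5 - 1) / 4 := by
  rw [mul_div_assoc, Real.cos_two_mul, Real.cos_pi_div_five]
  linear_combination (1 / 8 : ℝ) * Real.sq_sqrt (show (0 : ℝ) ≤ 5 by norm_num)

theorem cos_four_pi_div_five : Real.cos (4 * π / 5) = -(√5 + 1) / 4 := by
  have supplement : 4 * π / 5 = π - π / 5 := by ring
  rw [supplement, Real.cos_pi_sub, Real.cos_pi_div_five]
  ring

/-- The real values `ϑ₃ (z | i) / ϑ₃ (0 | i)` for real `z`, written so that their logarithms are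
visible. -/
noncomputable def realTheta (z : ℝ) : ℝ :=
  Real.exp ((cosineSeries (cosechCoeff 1) (2 * π * z) - cosineSeries (cosechCoeff 1) 0) / 2)

theorem realTheta_pos (z : ℝ) : 0 < realTheta z := Real.exp_pos _

theorem ofReal_realTheta (z : ℝ) : (realTheta z : ℂ) = normTheta z := by
  have h := jacobiTheta₂_ofReal_div one_pos z
  rw [Complex.ofReal_one, one_mul] at h
  exact h.symm

theorem realTheta_two_fifths_lt : realTheta (2 / 5) < realTheta (1 / 5) := by
  have cos_lt : Real.cos (2 * π * (2 / 5)) < Real.cos (2 * π * (1 / 5)) :=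
    Real.cos_lt_cos_of_nonneg_of_le_pi (by positivity) (by linarith [Real.pi_pos])
      (by linarith [Real.pi_pos])
  have series_lt := cosineSeries_cosechCoeff_lt one_pos cos_lt
  exact Real.exp_lt_exp.2 (by linarith)

theorem realTheta_pow_five_add_pow_five : realTheta (1 / 5) ^ 5 + realTheta (2 / 5) ^ 5 =
    realTheta (1 / 5) * realTheta (2 / 5) - (realTheta (1 / 5) * realTheta (2 / 5)) ^ 2 +
      2 * (realTheta (1 / 5) * realTheta (2 / 5)) ^ 3 := by
  have h := isFiveTorsion_normTheta.pow_five_add_pow_five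
  have h₁ := ofReal_realTheta (1 / 5)
  have h₂ := ofReal_realTheta (2 / 5)
  push_cast at h₁ h₂
  rw [← h₁, ← h₂] at h
  exact_mod_cast h

theorem realTheta_quadratic_mul_eq_zero :
    4 * (realTheta (1 / 5) * realTheta (2 / 5)) ^ 2 - 2 * (realTheta (1 / 5) * realTheta (2 / 5)) -
      1 = 0 := by
  have h := isFiveTorsion_normTheta.quadratic_mul_eq_zero
  have h₁ := ofReal_realTheta (1 / 5)
  have h₂ := ofReal_realTheta (2 / 5)
  push_cast at h₁ h₂
  rw [← h₁, ← h₂] at h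
  have pow_lt :=
    pow_lt_pow_left₀ realTheta_two_fifths_lt (realTheta_pos _).le (show 5 ≠ 0 by norm_num)
  have mul_pos := mul_pos (realTheta_pos (1 / 5)) (realTheta_pos (2 / 5))
  exact_mod_cast h (mod_cast mul_pos.ne') (mod_cast pow_lt.ne')

end SpecialValues

section LatticeSum

theorem tsum_neg_one_zpow_div_int_sq_add_sq {k : ℤ} (hk : k ≠ 0) :
    ∑' m : ℤ, (-1 : ℝ) ^ (m + (k + 1)) / ((m : ℝ) ^ 2 + (k : ℝ) ^ 2) = π * cosechCoeff 1 k := by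
  have h := (hasSum_neg_one_zpow_div_int_sq_add_sq (Int.cast_ne_zero.2 hk)).mul_left
    ((-1 : ℝ) ^ (k + 1))
  refine (hasSum_of_eq h (fun m ↦ ?_) ?_).tsum_eq
  · rw [zpow_add₀ (by norm_num), mul_comm, mul_div_assoc]
  · rw [cosechCoeff, mul_one]
    ring

theorem tsum_neg_one_zpow_div_five_mul_add_one (n : ℤ) :
    ∑' m : ℤ, (-1 : ℝ) ^ (m + n) / ((m : ℝ) ^ 2 + (5 * (n : ℝ) + 1) ^ 2) =
      π * cosechCoeff 1 (5 * n + 1) := by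
  rw [← tsum_neg_one_zpow_div_int_sq_add_sq (by lia)]
  refine tsum_congr fun m ↦ ?_
  have parity : m + (5 * n + 1 + 1) = m + n + 2 * (2 * n + 1) := by ring
  rw [parity, zpow_add₀ (by norm_num) (m + n), zpow_mul]
  norm_num

theorem hasSum_cosechCoeff_five_mul_add_one : HasSum (fun n : ℤ ↦ cosechCoeff 1 (5 * n + 1))
    (((√5 - 1) * Real.log (realTheta (1 / 5)) - (√5 + 1) * Real.log (realTheta (2 / 5))) / 5) := by
  refine hasSum_of_eq (hasSum_arithmeticProgression (summable_cosechCoeff one_pos)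
    (cosechCoeff_even 1) 5 1) (fun n ↦ rfl) ?_
  have reflect₃ : 2 * π * 3 / 5 = 2 * π - 4 * π / 5 := by ring
  have reflect₄ : 2 * π * 4 / 5 = 2 * π - 2 * π / 5 := by ring
  have two : 2 * π * 2 / 5 = 4 * π / 5 := by ring
  have one_fifth : 2 * π * (1 / 5) = 2 * π / 5 := by ring
  have two_fifths : 2 * π * (2 / 5) = 4 * π / 5 := by ring
  simp only [Finset.sum_range_succ, Finset.sum_range_zero, realTheta, Real.log_exp]
  push_cast
  simp only [mul_one, mul_zero, zero_div, Real.cos_zero, two, reflect₃, reflect₄,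
    cosineSeries_two_pi_sub, Real.cos_two_pi_sub, cos_two_pi_div_five, cos_four_pi_div_five,
    one_fifth, two_fifths]
  ring

end LatticeSum

/-- `∑∑ (-1)^{m+n}/(m² + (5n+1)²)
  = -(π/(5√5)) log(-19 + 9√5 - 3√(85 - 38√5)) + (π/5) log(√5 - 1)`. -/
theorem F51_at_one :
    Tendsto (fun N : ℕ => ∑ n ∈ Finset.Ioo (-(N : ℤ)) (N : ℤ),
        ∑' m : ℤ, (-1 : ℝ) ^ (m + n) / ((m : ℝ) ^ 2 + (5 * (n : ℝ) + 1) ^ 2))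
      atTop
      (nhds (-(Real.pi / (5 * Real.sqrt 5)) *
          Real.log (-19 + 9 * Real.sqrt 5 - 3 * Real.sqrt (85 - 38 * Real.sqrt 5))
        + Real.pi / 5 * Real.log (Real.sqrt 5 - 1))) := by
  set a := realTheta (1 / 5)
  set b := realTheta (2 / 5)
  have ha : 0 < a := realTheta_pos _
  have hb : 0 < b := realTheta_pos _
  have log_div :
      Real.log (-19 + 9 * √5 - 3 * √(85 - 38 * √5)) = 5 * (Real.log b - Real.log a) := by
    rw [← div_pow_five_eq hb realTheta_two_fifths_lt realTheta_quadratic_mul_eq_zero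
      realTheta_pow_five_add_pow_five, Real.log_pow, Real.log_div hb.ne' ha.ne', Nat.cast_ofNat]
  have log_mul : Real.log (√5 - 1) = -(Real.log a + Real.log b) := by
    rw [sqrt_five_sub_one_eq_inv (mul_pos ha hb) realTheta_quadratic_mul_eq_zero, Real.log_inv,
      Real.log_mul ha.ne' hb.ne']
  have value : -(π / (5 * √5)) * (5 * (Real.log b - Real.log a)) +
      π / 5 * -(Real.log a + Real.log b) =
      π * (((√5 - 1) * Real.log a - (√5 + 1) * Real.log b) / 5) := by
    field_simp
    linear_combination (Real.log b - Real.log a) * Real.sq_sqrt (show (0 : ℝ) ≤ 5 by norm_num)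
  have hasSum := hasSum_cosechCoeff_five_mul_add_one.mul_left π
  rw [HasSum, SummationFilter.unconditional_filter] at hasSum
  simp only [tsum_neg_one_zpow_div_five_mul_add_one]
  rw [log_div, log_mul, value]
  exact hasSum.comp Finset.tendsto_Ioo_neg
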